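/- arXiv:2209.01934 — 2 statements merged into one kernel-verified Lean document; each statement's English description precedes it below -/
import Mathlib

section
/- Large-N expansion of the Christoffel–Darboux identity at the singular origin (Proposition 2.2(c)). Under the singular-origin setup with 2L a positive integer and zooming point p = 0, as N → ∞ the complex derivative ∂_z κ̃_N(z,w) converges to F_o(z,w) := 2 e^{−(z−w)²} P(2L,2zw) − (2√π/Γ(L)) z^{2L−1} e^{−z²} P(L+1/2,w²), uniformly for (z,w) in compact subsets of ℂ × ℂ. -/
open MeasureTheory Filter Finset

noncomputable section

namespace SI

/-- The kernel `G_N(ζ,η)` built from the skew-orthogonal polynomials of the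
symplectic induced spherical ensemble (all powers are principal-branch `cpow`s,
which agree with the integer powers whenever `2L` is a nonnegative integer). -/
def GK (N : ℕ) (n L : ℝ) (ζ η : ℂ) : ℂ :=
  ((Real.pi : ℂ) * Complex.Gamma ((2*n+2*L+2 : ℝ) : ℂ) / (2:ℂ) ^ ((2*n+2*L+1 : ℝ) : ℂ)) *
  ∑ k ∈ range N, ∑ l ∈ range (k+1),
    ζ ^ ((2*k+2*L+1 : ℝ) : ℂ) * η ^ ((2*l+2*L : ℝ) : ℂ) /
      (Complex.Gamma ((k+L+3/2 : ℝ) : ℂ) * Complex.Gamma ((n-k : ℝ) : ℂ) *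
       Complex.Gamma ((n-l+1/2 : ℝ) : ℂ) * Complex.Gamma ((l+L+1 : ℝ) : ℂ))

/-- The skew-symmetric kernel `κ̂_N(ζ,η) = G_N(ζ,η) - G_N(η,ζ)`. -/
def KK (N : ℕ) (n L : ℝ) (ζ η : ℂ) : ℂ := GK N n L ζ η - GK N n L η ζ

/-- The density value `δ = ((n+L)/N)(1+p²)⁻²`. -/
def dlt (N : ℕ) (n L p : ℝ) : ℝ := ((n+L)/N) * (1+p^2)^(-2 : ℝ)

/-- `√(Nδ)`. -/
def sc (N : ℕ) (n L p : ℝ) : ℝ := Real.sqrt (N * dlt N n L p)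

/-- The rescaled kernel `κ̃_N(z,w)`. -/
def resc (N : ℕ) (n L p : ℝ) (z w : ℂ) : ℂ :=
  (((1+p^2) ^ (-3 : ℝ) : ℝ) : ℂ) * (((N * dlt N n L p) ^ (-(3/2) : ℝ) : ℝ) : ℂ) *
  ((1 + ((p:ℂ) + z / (sc N n L p : ℂ))^2) * (1 + ((p:ℂ) + w / (sc N n L p : ℂ))^2))
      ^ ((-(n+L-1/2) : ℝ) : ℂ) *
  KK N n L ((p:ℂ) + z / (sc N n L p : ℂ)) ((p:ℂ) + w / (sc N n L p : ℂ))

/-- The regularised incomplete gamma function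
`P(2L, x) = (x^{2L}/Γ(2L)) ∫₀¹ s^{2L-1} e^{-xs} ds` with `M = 2L ∈ ℕ`. -/
def P2L (M : ℕ) (x : ℂ) : ℂ :=
  (x ^ M / Complex.Gamma ((M : ℝ) : ℂ)) *
    ∫ s in (0:ℝ)..1, (s:ℂ) ^ (M-1) * Complex.exp (-x*(s:ℂ))

/-- `P(L+1/2, w²) = (w^{2L+1}/Γ(L+1/2)) ∫₀¹ s^{L-1/2} e^{-w²s} ds` with `M = 2L`. -/
def PLhalf (M : ℕ) (L : ℝ) (w : ℂ) : ℂ :=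
  (w ^ (M+1) / Complex.Gamma ((L+1/2 : ℝ) : ℂ)) *
    ∫ s in (0:ℝ)..1, ((s ^ (L-1/2) : ℝ) : ℂ) * Complex.exp (-w^2*(s:ℂ))

/-- The limiting inhomogeneous term `F_o` at the singular origin, with `M = 2L`. -/
def Fo (M : ℕ) (L : ℝ) (z w : ℂ) : ℂ :=
  2 * Complex.exp (-(z-w)^2) * P2L M (2*z*w)
    - (2 * (Real.sqrt Real.pi : ℂ) / Complex.Gamma ((L : ℝ) : ℂ)) * z ^ (M-1) *
        Complex.exp (-z^2) * PLhalf M L w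

/-- The admissible system sizes in the singular-origin regime:
positive `N` for which `n = (b+1)N` is an integer. -/
def Ssing (b : ℝ) : Set ℕ :=
  {N | 0 < N ∧ ∃ nm : ℕ, (nm : ℝ) = (b+1)*N}

/-!
Dividing the Gamma factors of `GK` by their large-`n` behaviour turns the rescaled kernel at the
origin into an explicit prefactor times triangular sums `∑_{k < N} x_k ∑_{l ≤ k} y_l`, whose terms
are those of the series of `exp(z²) P(m/2, z²)` with corrections in `[0, 1]` that tend to `1`.
By Tannery's theorem the kernels converge, even when the arguments move with `N`. Such continuous
convergence is locally uniform, so by Weierstrass the `z`-derivatives converge in the same sense to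
the derivative of the limit.

The terms satisfy `x_k' = 2 z x_{k-1}`, so differentiating a triangular series reproduces `2 z`
times the series, which the derivative of `exp(-z²)` cancels. Left over are a boundary term, giving
`P(L + 1/2, w²)`, and two diagonal series, which by the duplication formula are the even and odd
halves of the series of `P(2L, 2zw)`.
-/

section ContinuousConvergence

open Topology

variable {ι α β : Type*} {l : Filter ι}

theorem continuous_of_forall_tendsto_prod_nhds [TopologicalSpace α] [TopologicalSpace β]
    [RegularSpace β] [l.NeBot] {F : ι → α → β} {f : α → β}
    (h : ∀ x, Tendsto (fun p : ι × α => F p.1 p.2) (l ×ˢ 𝓝 x) (𝓝 (f x))) : Continuous f := by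
  refine continuous_iff_continuousAt.2 fun x => ?_
  refine ((closed_nhds_basis (f x)).tendsto_right_iff).2 fun V ⟨hV, hVc⟩ => ?_
  obtain ⟨P, hP, Q, hQ, hPQ⟩ := eventually_prod_iff.1 ((h x).eventually hV)
  filter_upwards [hQ] with y hy
  have hy' : Tendsto (fun i => F i y) l (𝓝 (f y)) :=
    (h y).comp (tendsto_id.prodMk (tendsto_const_pure.mono_right (pure_le_nhds y)))
  exact hVc.mem_of_tendsto hy' (hP.mono fun i hi => hPQ hi hy)

theorem tendstoLocallyUniformly_of_forall_tendsto_prod_nhds [TopologicalSpace α] [UniformSpace β]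
    [l.NeBot] {F : ι → α → β} {f : α → β}
    (h : ∀ x, Tendsto (fun p : ι × α => F p.1 p.2) (l ×ˢ 𝓝 x) (𝓝 (f x))) :
    TendstoLocallyUniformly F f l := by
  refine tendstoLocallyUniformly_iff_filter.2 fun x => tendstoUniformlyOnFilter_iff_tendsto.2 ?_
  have hf : Tendsto (fun p : ι × α => f p.2) (l ×ˢ 𝓝 x) (𝓝 (f x)) :=
    ((continuous_of_forall_tendsto_prod_nhds h).tendsto x).comp tendsto_snd
  exact (hf.prodMk_nhds (h x)).mono_right (nhds_le_uniformity (f x))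

theorem tendsto_deriv_prod_nhds [l.NeBot] {F : ι → ℂ → ℂ} {f : ℂ → ℂ} {z₀ : ℂ}
    (h : ∀ z, Tendsto (fun p : ι × ℂ => F p.1 p.2) (l ×ˢ 𝓝 z) (𝓝 (f z)))
    (hF : ∀ᶠ p in l ×ˢ 𝓝 z₀, DifferentiableAt ℂ (F p.1) p.2) :
    Tendsto (fun p : ι × ℂ => deriv (F p.1) p.2) (l ×ˢ 𝓝 z₀) (𝓝 (deriv f z₀)) := by
  obtain ⟨P, hP, Q, hQ, hPQ⟩ := eventually_prod_iff.1 hF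
  obtain ⟨U, hUQ, hU, hz₀⟩ := eventually_nhds_iff.1 hQ
  have hlim : TendstoLocallyUniformlyOn F f l U :=
    (tendstoLocallyUniformly_of_forall_tendsto_prod_nhds h).tendstoLocallyUniformlyOn
  have hdiff : ∀ᶠ i in l, DifferentiableOn ℂ (F i) U := hP.mono fun i hi z hz =>
    (hPQ hi (hUQ z hz)).differentiableWithinAt
  have hderiv : TendstoLocallyUniformlyOn (fun p : ι × ℂ => deriv (F p.1)) (deriv f)
      (l ×ˢ 𝓝 z₀) U := fun u hu z hz =>
    (hlim.deriv hdiff hU u hu z hz).imp fun t ht => ⟨ht.1, tendsto_fst.eventually ht.2⟩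
  have hcont : ContinuousOn (deriv f) U := ((hlim.differentiableOn hdiff hU).deriv hU).continuousOn
  exact hderiv.tendsto_comp (hcont z₀ hz₀) hz₀ (tendsto_snd.mono_right (hU.nhdsWithin_eq hz₀).ge)

end ContinuousConvergence

section ExponentialLimit

open Topology Asymptotics Complex

variable {ι : Type*} {l : Filter ι}

theorem tendsto_one_add_cpow_exp {u c : ι → ℂ} {t : ℂ} (hu : Tendsto u l (𝓝 0))
    (hcu : Tendsto (fun i => c i * u i) l (𝓝 t)) :
    Tendsto (fun i => (1 + u i) ^ c i) l (𝓝 (exp t)) := by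
  have hO : (fun i => c i * (log (1 + u i) - u i)) =O[l] fun i => c i * u i * u i := by
    simpa only [sq, mul_assoc, Function.comp_def] using
      (isBigO_refl c l).mul (log_sub_self_isBigO.comp_tendsto hu)
  have hlog : Tendsto (fun i => c i * log (1 + u i)) l (𝓝 t) := by
    have h0 := hO.trans_tendsto (by simpa only [mul_zero] using hcu.mul hu)
    simpa only [mul_sub, sub_add_cancel, zero_add] using h0.add hcu
  have hbase : Tendsto (fun i => 1 + u i) l (𝓝 1) := by
    simpa only [add_zero] using hu.const_add 1
  have hne : ∀ᶠ i in l, 1 + u i ≠ 0 := hbase.eventually_ne one_ne_zero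
  refine ((continuous_exp.tendsto t).comp hlog).congr' (hne.mono fun i hi => ?_)
  simp only [Function.comp_apply, cpow_def_of_ne_zero hi, mul_comm]

variable {a : ι → ℝ} {z w : ι → ℂ} {z₀ w₀ : ℂ}

theorem tendsto_one_add_sq_div_mul (ha : Tendsto a l atTop) (hz : Tendsto z l (𝓝 z₀))
    (hw : Tendsto w l (𝓝 w₀)) :
    Tendsto (fun i => (1 + z i ^ 2 / a i) * (1 + w i ^ 2 / a i)) l (𝓝 1) := by
  have hinv : Tendsto (fun i => ((a i)⁻¹ : ℂ)) l (𝓝 0) := by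
    exact_mod_cast (tendsto_inv_atTop_zero.comp ha).ofReal
  simpa [div_eq_mul_inv] using
    (((hz.pow 2).mul hinv).const_add 1).mul (((hw.pow 2).mul hinv).const_add 1)

theorem tendsto_one_add_sq_div_mul_cpow (ha : Tendsto a l atTop) (hz : Tendsto z l (𝓝 z₀))
    (hw : Tendsto w l (𝓝 w₀)) :
    Tendsto (fun i => ((1 + z i ^ 2 / a i) * (1 + w i ^ 2 / a i)) ^ ((-(a i - 1 / 2) : ℝ) : ℂ)) l
      (𝓝 (exp (-z₀ ^ 2 - w₀ ^ 2))) := by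
  have hinv : Tendsto (fun i => ((a i)⁻¹ : ℂ)) l (𝓝 0) := by
    exact_mod_cast (tendsto_inv_atTop_zero.comp ha).ofReal
  have hu := (tendsto_one_add_sq_div_mul ha hz hw).sub_const 1
  have hv : Tendsto (fun i => z i ^ 2 + w i ^ 2 + z i ^ 2 * w i ^ 2 * (a i)⁻¹) l
      (𝓝 (z₀ ^ 2 + w₀ ^ 2)) := by
    simpa using ((hz.pow 2).add (hw.pow 2)).add (((hz.pow 2).mul (hw.pow 2)).mul hinv)
  have hcu : Tendsto (fun i => ((-(a i - 1 / 2) : ℝ) : ℂ) *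
      ((1 + z i ^ 2 / a i) * (1 + w i ^ 2 / a i) - 1)) l (𝓝 (-z₀ ^ 2 - w₀ ^ 2)) := by
    have h := (((hinv.const_mul (1 / 2)).sub_const 1).mul hv)
    rw [show (1 / 2 * 0 - 1) * (z₀ ^ 2 + w₀ ^ 2) = -z₀ ^ 2 - w₀ ^ 2 by ring] at h
    refine h.congr' ((ha.eventually_ne_atTop 0).mono fun i hi => ?_)
    have hi' : (a i : ℂ) ≠ 0 := mod_cast hi
    push_cast
    field_simp
    ring
  simpa only [add_sub_cancel] using tendsto_one_add_cpow_exp (by simpa only [sub_self] using hu) hcu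

end ExponentialLimit

section IncompleteGamma

open Complex
open scoped Nat

theorem integral_rpow_mul_one_sub_pow {c : ℝ} (hc : 0 < c) (k : ℕ) :
    ∫ s in (0 : ℝ)..1, s ^ (c - 1) * (1 - s) ^ k = k ! * Real.Gamma c / Real.Gamma (c + k + 1) := by
  have hk : (0 : ℝ) < k + 1 := k.cast_add_one_pos
  have hbeta := ProbabilityTheory.beta_eq_betaIntegralReal c (k + 1) hc hk
  have hint : betaIntegral c (k + 1 : ℝ) =
      ((∫ s in (0 : ℝ)..1, s ^ (c - 1) * (1 - s) ^ k : ℝ) : ℂ) := by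
    rw [betaIntegral, ← intervalIntegral.integral_ofReal]
    refine intervalIntegral.integral_congr fun s hs => ?_
    rw [Set.uIcc_of_le zero_le_one] at hs
    simp [ofReal_cpow hs.1]
  rw [hint, ofReal_re, ProbabilityTheory.beta, Real.Gamma_nat_eq_factorial] at hbeta
  rw [← hbeta, ← add_assoc, mul_comm]

theorem hasSum_integral_rpow_mul_exp {c : ℝ} (hc : 0 < c) (x : ℂ) :
    HasSum (fun k : ℕ => ∫ s in (0 : ℝ)..1, ((s ^ (c - 1) : ℝ) : ℂ) * ((x * (1 - s : ℝ)) ^ k / k !))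
      (∫ s in (0 : ℝ)..1, ((s ^ (c - 1) : ℝ) : ℂ) * exp (x * (1 - s : ℝ))) := by
  have hexp (y : ℝ) : HasSum (fun k : ℕ => y ^ k / k !) (Real.exp y) := by
    simpa only [Real.exp_eq_exp_ℝ] using NormedSpace.expSeries_div_hasSum_exp y
  refine intervalIntegral.hasSum_integral_of_dominated_convergence
    (fun k s => s ^ (c - 1) * ((‖x‖ * |1 - s|) ^ k / k !)) (fun k => by fun_prop)
    (fun k => .of_forall fun s hs => ?_)
    (.of_forall fun s _ => (hexp _).summable.mul_left _) ?_ (.of_forall fun s _ => ?_)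
  · rw [Set.uIoc_of_le zero_le_one] at hs
    rw [norm_mul, norm_div, norm_pow, norm_mul, norm_real, norm_real, norm_natCast,
      Real.norm_of_nonneg (Real.rpow_nonneg hs.1.le _), Real.norm_eq_abs]
  · simp only [tsum_mul_left, (hexp _).tsum_eq]
    exact (intervalIntegral.intervalIntegrable_rpow' (by linarith)).mul_continuousOn (by fun_prop)
  · simpa only [Complex.exp_eq_exp_ℂ] using
      (NormedSpace.expSeries_div_hasSum_exp (x * (1 - s : ℝ))).mul_left _

theorem hasSum_pow_div_Gamma {c : ℝ} (hc : 0 < c) (x : ℂ) :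
    HasSum (fun k : ℕ => x ^ k / (Real.Gamma (c + k + 1) : ℂ))
      (exp x * (∫ s in (0 : ℝ)..1, ((s ^ (c - 1) : ℝ) : ℂ) * exp (-x * s)) / Real.Gamma c) := by
  have hΓ : (Real.Gamma c : ℂ) ≠ 0 := mod_cast (Real.Gamma_pos_of_pos hc).ne'
  have hterm (k : ℕ) : x ^ k / (Real.Gamma (c + k + 1) : ℂ) =
      (∫ s in (0 : ℝ)..1, ((s ^ (c - 1) : ℝ) : ℂ) * ((x * (1 - s : ℝ)) ^ k / k !)) /
        Real.Gamma c := by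
    have hk : (k ! : ℂ) ≠ 0 := mod_cast k.factorial_ne_zero
    have hpull (s : ℝ) : ((s ^ (c - 1) : ℝ) : ℂ) * ((x * (1 - s : ℝ)) ^ k / k !) =
        x ^ k / k ! * ((s ^ (c - 1) * (1 - s) ^ k : ℝ) : ℂ) := by
      rw [mul_pow]
      push_cast
      ring
    simp only [hpull, intervalIntegral.integral_const_mul, intervalIntegral.integral_ofReal,
      integral_rpow_mul_one_sub_pow hc]
    push_cast
    field_simp
  have hexp (s : ℝ) : exp (x * (1 - s : ℝ)) = exp x * exp (-x * s) := by
    rw [← Complex.exp_add]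
    push_cast
    ring_nf
  have h := (hasSum_integral_rpow_mul_exp hc x).div_const (Real.Gamma c : ℂ)
  simp only [hexp, mul_left_comm _ (exp x), intervalIntegral.integral_const_mul] at h
  simpa only [hterm] using h

end IncompleteGamma

section TriangularSeries

open Topology

/-- The triangular sum `∑_{k < N} x_k ∑_{l ≤ k} y_l`. -/
def triSum {R : Type*} [Semiring R] (N : ℕ) (x y : ℕ → R) : R :=
  ∑ k ∈ range N, x k * ∑ l ∈ range (k + 1), y l

/-- The triangular series `∑_k x_k ∑_{l ≤ k} y_l`, the limit of `triSum N x y` as `N → ∞`. -/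
def triTsum {R : Type*} [Semiring R] [TopologicalSpace R] (x y : ℕ → R) : R :=
  ∑' k, x k * ∑ l ∈ range (k + 1), y l

variable {R : Type*} [NormedRing R]

theorem norm_mul_sum_range_le {x y : ℕ → R} {X Y : ℕ → ℝ} (hY : Summable fun k => ‖Y k‖) {k : ℕ}
    (hx : ‖x k‖ ≤ X k) (hy : ∀ l ≤ k, ‖y l‖ ≤ Y l) :
    ‖x k * ∑ l ∈ range (k + 1), y l‖ ≤ X k * ∑' l, ‖Y l‖ := by
  have hsum : ‖∑ l ∈ range (k + 1), y l‖ ≤ ∑' l, ‖Y l‖ :=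
    (norm_sum_le_of_le _ fun l hl => (hy l (Nat.lt_succ_iff.1 (mem_range.1 hl))).trans
      (Real.le_norm_self _)).trans (hY.sum_le_tsum _ fun l _ => norm_nonneg _)
  exact (norm_mul_le _ _).trans
    (mul_le_mul hx hsum (norm_nonneg _) ((norm_nonneg _).trans hx))

variable [CompleteSpace R]

theorem hasSum_triTsum {x y : ℕ → R} (hx : Summable fun k => ‖x k‖) (hy : Summable fun k => ‖y k‖) :
    HasSum (fun k => x k * ∑ l ∈ range (k + 1), y l) (triTsum x y) :=
  (Summable.of_norm_bounded (hx.mul_right _) fun _ =>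
    norm_mul_sum_range_le (X := fun k => ‖x k‖) (Y := fun l => ‖y l‖) (by simpa only [norm_norm])
      le_rfl fun _ _ => le_rfl).hasSum

theorem tendsto_triSum {ι : Type*} {l : Filter ι} {N : ι → ℕ} (hN : Tendsto N l atTop)
    {x y : ι → ℕ → R} {x₀ y₀ : ℕ → R} {X Y : ℕ → ℝ}
    (hx : ∀ k, Tendsto (fun i => x i k) l (𝓝 (x₀ k)))
    (hy : ∀ k, Tendsto (fun i => y i k) l (𝓝 (y₀ k))) (hX : Summable X) (hY : Summable Y)
    (hxX : ∀ᶠ i in l, ∀ k < N i, ‖x i k‖ ≤ X k) (hyY : ∀ᶠ i in l, ∀ k < N i, ‖y i k‖ ≤ Y k) :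
    Tendsto (fun i => triSum (N i) (x i) (y i)) l (𝓝 (triTsum x₀ y₀)) := by
  have htri (i : ι) : triSum (N i) (x i) (y i) = ∑' k, Set.indicator (range (N i) : Set ℕ)
      (fun k => x i k * ∑ l ∈ range (k + 1), y i l) k := sum_eq_tsum_indicator _ _
  simp only [htri]
  refine tendsto_tsum_of_dominated_convergence (hX.norm.mul_right (∑' l, ‖Y l‖)) (fun k => ?_) ?_
  · refine ((hx k).mul (tendsto_finsetSum _ fun l _ => hy l)).congr' ?_
    filter_upwards [hN.eventually_gt_atTop k] with i hi
    rw [Set.indicator_of_mem (mem_coe.2 (mem_range.2 hi))]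
  · filter_upwards [hxX, hyY] with i hxi hyi k
    by_cases hk : k < N i
    · rw [Set.indicator_of_mem (mem_coe.2 (mem_range.2 hk))]
      exact norm_mul_sum_range_le (X := fun k => ‖X k‖) hY.norm
        ((hxi k hk).trans (Real.le_norm_self _)) fun l hl => hyi l (hl.trans_lt hk)
    · rw [Set.indicator_of_notMem (by simpa using hk), norm_zero]
      positivity

theorem hasDerivAt_triTsum {x y : ℕ → ℂ → ℂ} {X Y : ℕ → ℝ} {U : Set ℂ} {z s : ℂ}
    (hx : ∀ k, DifferentiableOn ℂ (x k) U) (hy : ∀ k, DifferentiableOn ℂ (y k) U)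
    (hX : Summable X) (hY : Summable Y) (hxX : ∀ k, ∀ v ∈ U, ‖x k v‖ ≤ X k)
    (hyY : ∀ k, ∀ v ∈ U, ‖y k v‖ ≤ Y k) (hU : IsOpen U) (hz : z ∈ U)
    (hs : HasSum (fun k => deriv (fun v => x k v * ∑ l ∈ range (k + 1), y l v) z) s) :
    HasDerivAt (fun v => triTsum (x · v) (y · v)) s z := by
  have hterm (k : ℕ) : DifferentiableOn ℂ (fun v => x k v * ∑ l ∈ range (k + 1), y l v) U :=
    (hx k).mul (DifferentiableOn.fun_sum fun l _ => hy l)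
  have hbound (k : ℕ) (v : ℂ) (hv : v ∈ U) :
      ‖x k v * ∑ l ∈ range (k + 1), y l v‖ ≤ X k * ∑' l, ‖Y l‖ :=
    norm_mul_sum_range_le (x := (x · v)) hY.norm (hxX k v hv) fun l _ => hyY l v hv
  have hsum := hX.mul_right (∑' l, ‖Y l‖)
  rw [hs.unique (Complex.hasSum_deriv_of_summable_norm hsum hterm hU hbound hz)]
  exact ((Complex.differentiableOn_tsum_of_summable_norm hsum hterm hU hbound).differentiableAt
    (hU.mem_nhds hz)).hasDerivAt

end TriangularSeries

section GammaSeries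

open Complex
open scoped Nat

/-- The `k`-th term `z^(2k+m) / Γ(k + m/2 + 1)` of the series of `exp(z²) P(m/2, z²)`. With
`m = 2L + 1` and `m = 2L` these are the `ζ`- and `η`-factors of `GK`, up to rescaling. -/
def gammaTerm (m : ℕ) (z : ℂ) (k : ℕ) : ℂ :=
  z ^ (2 * k + m) / (Real.Gamma (k + m / 2 + 1) : ℂ)

theorem hasSum_gammaTerm {m : ℕ} (hm : 0 < m) (z : ℂ) :
    HasSum (gammaTerm m z) (z ^ m * (exp (z ^ 2) *
      (∫ s in (0 : ℝ)..1, ((s ^ ((m : ℝ) / 2 - 1) : ℝ) : ℂ) * exp (-z ^ 2 * s)) /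
        Real.Gamma (m / 2))) := by
  have hterm (k : ℕ) : gammaTerm m z k =
      z ^ m * ((z ^ 2) ^ k / (Real.Gamma ((m : ℝ) / 2 + k + 1) : ℂ)) := by
    rw [gammaTerm, pow_add, pow_mul, mul_comm (_ ^ k), mul_div_assoc, add_comm (k : ℝ)]
  rw [funext hterm]
  exact (hasSum_pow_div_Gamma (half_pos (Nat.cast_pos.2 hm)) (z ^ 2)).mul_left (z ^ m)

theorem hasSum_gammaTerm_PLhalf {L : ℝ} {M : ℕ} (hM : 2 * L = M) (w : ℂ) :
    HasSum (gammaTerm (M + 1) w) (exp (w ^ 2) * PLhalf M L w) := by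
  have hL : ((M + 1 : ℕ) : ℝ) / 2 = L + 1 / 2 := by
    push_cast
    linarith
  have h := hasSum_gammaTerm M.succ_pos w
  rw [Nat.succ_eq_add_one, hL, show L + 1 / 2 - 1 = L - 1 / 2 by ring] at h
  rw [PLhalf, Gamma_ofReal]
  convert! h using 1
  ring

theorem summable_norm_gammaTerm {m : ℕ} (hm : 0 < m) (z : ℂ) :
    Summable fun k => ‖gammaTerm m z k‖ :=
  (hasSum_gammaTerm hm z).summable.norm

theorem norm_gammaTerm_le_norm_gammaTerm {z w : ℂ} (h : ‖z‖ ≤ ‖w‖) (m k : ℕ) :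
    ‖gammaTerm m z k‖ ≤ ‖gammaTerm m w k‖ := by
  simp only [gammaTerm, norm_div, norm_pow]
  gcongr

theorem hasDerivAt_gammaTerm {m : ℕ} (hm : 0 < m) (z : ℂ) (k : ℕ) :
    HasDerivAt (gammaTerm m · k) (2 * z ^ (2 * k + m - 1) / (Real.Gamma (k + m / 2) : ℂ)) z := by
  have hpos : (0 : ℝ) < k + m / 2 := by positivity
  have hΓ : (Real.Gamma (k + m / 2) : ℂ) ≠ 0 := mod_cast (Real.Gamma_pos_of_pos hpos).ne'
  have hne : (2 * k + m : ℂ) ≠ 0 := by norm_cast; lia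
  convert! (hasDerivAt_pow (2 * k + m) z).div_const (Real.Gamma (k + m / 2 + 1) : ℂ) using 1
  rw [Real.Gamma_add_one hpos.ne']
  push_cast
  field_simp [hΓ]

theorem differentiable_gammaTerm (m k : ℕ) : Differentiable ℂ (gammaTerm m · k) := by
  unfold gammaTerm
  fun_prop

theorem deriv_gammaTerm_succ {m : ℕ} (hm : 0 < m) (z : ℂ) (k : ℕ) :
    deriv (gammaTerm m · (k + 1)) z = 2 * z * gammaTerm m z k := by
  rw [(hasDerivAt_gammaTerm hm z (k + 1)).deriv, gammaTerm,
    show 2 * (k + 1) + m - 1 = 2 * k + m + 1 by lia]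
  push_cast
  rw [pow_succ, add_right_comm (k : ℝ)]
  ring

theorem Gamma_half_mul_Gamma_half_add_one (p : ℕ) :
    Real.Gamma ((p + 1) / 2) * Real.Gamma (p / 2 + 1) = p ! * √Real.pi / 2 ^ p := by
  have h := Real.Gamma_mul_Gamma_add_half ((p + 1) / 2)
  rw [show ((p : ℝ) + 1) / 2 + 1 / 2 = p / 2 + 1 by ring, mul_div_cancel₀ _ two_ne_zero,
    Real.Gamma_nat_eq_factorial, show (1 : ℝ) - (p + 1) = -p by ring,
    Real.rpow_neg zero_le_two, Real.rpow_natCast] at h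
  rw [h]
  ring

theorem sqrt_pi_mul_pow_div_Gamma (p : ℕ) (z w : ℂ) :
    (√Real.pi : ℂ) * (z ^ p / (Real.Gamma ((p + 1) / 2) : ℂ) *
      (w ^ p / (Real.Gamma (p / 2 + 1) : ℂ))) = (2 * z * w) ^ p / p ! := by
  have hπ : (√Real.pi : ℂ) ≠ 0 := mod_cast (Real.sqrt_pos.2 Real.pi_pos).ne'
  rw [div_mul_div_comm, ← ofReal_mul, Gamma_half_mul_Gamma_half_add_one]
  push_cast
  rw [mul_pow, mul_pow]
  field_simp

theorem hasSum_pow_div_factorial_P2L {M : ℕ} (hM : 0 < M) (x : ℂ) :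
    HasSum (fun j => x ^ (j + M) / (j + M)!) (exp x * P2L M x) := by
  have h := (hasSum_pow_div_Gamma (Nat.cast_pos.2 hM) x).mul_left (x ^ M)
  have hexp (s : ℝ) : s ^ ((M : ℝ) - 1) = s ^ (M - 1) := by
    rw [← Real.rpow_natCast, Nat.cast_pred hM]
  have hterm (j : ℕ) : x ^ M * (x ^ j / (Real.Gamma (M + j + 1) : ℂ)) =
      x ^ (j + M) / (j + M)! := by
    rw [← Nat.cast_add, Real.Gamma_nat_eq_factorial, add_comm M, pow_add, ofReal_natCast]
    ring
  simp only [hexp, hterm, ofReal_pow] at h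
  rw [P2L, Gamma_ofReal]
  convert! h using 1
  ring

end GammaSeries

section LimitKernel

open Complex
open scoped Nat

variable {M : ℕ}

theorem sqrt_pi_mul_deriv_gammaTerm_mul (M : ℕ) (z w : ℂ) (k : ℕ) :
    √Real.pi * (deriv (gammaTerm (M + 1) · k) z * gammaTerm M w k) =
      2 * ((2 * z * w) ^ (2 * k + M) / (2 * k + M)!) := by
  rw [(hasDerivAt_gammaTerm M.succ_pos z k).deriv, gammaTerm, ← sqrt_pi_mul_pow_div_Gamma,
    show (((2 * k + M : ℕ) : ℝ) + 1) / 2 = k + (M + 1 : ℕ) / 2 by push_cast; ring,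
    show ((2 * k + M : ℕ) : ℝ) / 2 + 1 = k + M / 2 + 1 by push_cast; ring,
    show 2 * k + (M + 1) - 1 = 2 * k + M from rfl]
  ring

theorem sqrt_pi_mul_gammaTerm_mul (M : ℕ) (z w : ℂ) (k : ℕ) :
    √Real.pi * (2 * z * (gammaTerm (M + 1) w k * gammaTerm M z k)) =
      2 * ((2 * z * w) ^ (2 * k + 1 + M) / (2 * k + 1 + M)!) := by
  rw [gammaTerm, gammaTerm, ← sqrt_pi_mul_pow_div_Gamma,
    show (((2 * k + 1 + M : ℕ) : ℝ) + 1) / 2 = k + M / 2 + 1 by push_cast; ring,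
    show ((2 * k + 1 + M : ℕ) : ℝ) / 2 + 1 = k + (M + 1 : ℕ) / 2 + 1 by push_cast; ring]
  ring

theorem summable_deriv_gammaTerm_mul (hM : 0 < M) (z w : ℂ) :
    Summable fun k => deriv (gammaTerm (M + 1) · k) z * gammaTerm M w k := by
  have hπ : (√Real.pi : ℂ) ≠ 0 := mod_cast (Real.sqrt_pos.2 Real.pi_pos).ne'
  rw [← summable_mul_left_iff hπ]
  simp only [sqrt_pi_mul_deriv_gammaTerm_mul]
  exact ((hasSum_pow_div_factorial_P2L hM (2 * z * w)).summable.comp_injective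
    (mul_right_injective₀ two_ne_zero)).mul_left 2

theorem sqrt_pi_mul_tsum_diagonal (hM : 0 < M) (z w : ℂ) :
    √Real.pi * (∑' k, deriv (gammaTerm (M + 1) · k) z * gammaTerm M w k +
      2 * z * ∑' k, gammaTerm (M + 1) w k * gammaTerm M z k) =
        2 * (exp (2 * z * w) * P2L M (2 * z * w)) := by
  set f : ℕ → ℂ := fun j => 2 * ((2 * z * w) ^ (j + M) / (j + M)!) with hf
  have hsum : HasSum f (2 * (exp (2 * z * w) * P2L M (2 * z * w))) :=
    (hasSum_pow_div_factorial_P2L hM (2 * z * w)).mul_left 2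
  have hinj : Function.Injective fun k : ℕ => 2 * k := mul_right_injective₀ two_ne_zero
  have heven : HasSum (fun k => f (2 * k)) (∑' k, f (2 * k)) :=
    (hsum.summable.comp_injective hinj).hasSum
  have hodd : HasSum (fun k => f (2 * k + 1)) (∑' k, f (2 * k + 1)) :=
    (hsum.summable.comp_injective ((add_left_injective 1).comp hinj)).hasSum
  rw [← (heven.even_add_odd hodd).unique hsum]
  simp only [hf, ← sqrt_pi_mul_deriv_gammaTerm_mul, ← sqrt_pi_mul_gammaTerm_mul, tsum_mul_left]
  ring

/-- The limit of the rescaled kernels `resc` at the singular origin. -/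
def limitKernel (M : ℕ) (z w : ℂ) : ℂ :=
  √Real.pi * exp (-z ^ 2 - w ^ 2) *
    (triTsum (gammaTerm (M + 1) z) (gammaTerm M w) - triTsum (gammaTerm (M + 1) w) (gammaTerm M z))

theorem norm_gammaTerm_le_of_mem_ball {v z : ℂ} (hv : v ∈ Metric.ball 0 (‖z‖ + 1)) (m k : ℕ) :
    ‖gammaTerm m v k‖ ≤ ‖gammaTerm m (‖z‖ + 1 : ℝ) k‖ := by
  refine norm_gammaTerm_le_norm_gammaTerm ?_ m k
  rw [norm_real]
  exact (mem_ball_zero_iff.1 hv).le.trans (Real.le_norm_self _)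

theorem hasDerivAt_triTsum_left (hM : 0 < M) (z w : ℂ) :
    HasDerivAt (fun v => triTsum (gammaTerm (M + 1) v) (gammaTerm M w))
      (∑' k, deriv (gammaTerm (M + 1) · k) z * gammaTerm M w k +
        2 * z * triTsum (gammaTerm (M + 1) z) (gammaTerm M w)) z := by
  have hM' := M.succ_pos
  refine hasDerivAt_triTsum
    (x := fun k v => gammaTerm (M + 1) v k) (y := fun k _ => gammaTerm M w k)
    (fun k => (differentiable_gammaTerm _ k).differentiableOn)
    (fun k => differentiableOn_const _) (summable_norm_gammaTerm hM' _)
    (summable_norm_gammaTerm hM w) (fun k v hv => norm_gammaTerm_le_of_mem_ball (z := z) hv _ k)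
    (fun _ _ _ => le_rfl) Metric.isOpen_ball (by simp) ?_
  have hdiag := (summable_deriv_gammaTerm_mul hM z w).hasSum
  have hoff : HasSum (fun k => deriv (gammaTerm (M + 1) · k) z * ∑ l ∈ range k, gammaTerm M w l)
      (2 * z * triTsum (gammaTerm (M + 1) z) (gammaTerm M w)) := by
    refine (hasSum_nat_add_iff' 1).1 ?_
    have h := (hasSum_triTsum (summable_norm_gammaTerm hM' z)
      (summable_norm_gammaTerm hM w)).mul_left (2 * z)
    simpa only [deriv_gammaTerm_succ hM', mul_assoc, sum_range_one, sum_range_zero, mul_zero,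
      sub_zero] using h
  convert! hdiag.add hoff using 2 with k
  rw [deriv_mul_const_field, sum_range_succ]
  ring

theorem deriv_sum_gammaTerm (hM : 0 < M) (z : ℂ) (k : ℕ) :
    deriv (fun v => ∑ l ∈ range (k + 1), gammaTerm M v l) z =
      deriv (gammaTerm M · 0) z +
        2 * z * (∑ l ∈ range (k + 1), gammaTerm M z l - gammaTerm M z k) := by
  rw [deriv_fun_sum fun l _ => differentiable_gammaTerm M l z, sum_range_succ']
  simp only [deriv_gammaTerm_succ hM, ← mul_sum]
  rw [sum_range_succ _ k]
  ring

theorem hasDerivAt_triTsum_right (hM : 0 < M) (z w : ℂ) :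
    HasDerivAt (fun v => triTsum (gammaTerm (M + 1) w) (gammaTerm M v))
      (deriv (gammaTerm M · 0) z * ∑' k, gammaTerm (M + 1) w k +
        2 * z * (triTsum (gammaTerm (M + 1) w) (gammaTerm M z) -
          ∑' k, gammaTerm (M + 1) w k * gammaTerm M z k)) z := by
  have hM' := M.succ_pos
  refine hasDerivAt_triTsum
    (x := fun k _ => gammaTerm (M + 1) w k) (y := fun k v => gammaTerm M v k)
    (fun k => differentiableOn_const _)
    (fun k => (differentiable_gammaTerm _ k).differentiableOn)
    (summable_norm_gammaTerm hM' w) (summable_norm_gammaTerm hM _)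
    (fun _ _ _ => le_rfl) (fun k v hv => norm_gammaTerm_le_of_mem_ball (z := z) hv _ k)
    Metric.isOpen_ball (by simp) ?_
  have htri := hasSum_triTsum (summable_norm_gammaTerm hM' w) (summable_norm_gammaTerm hM z)
  have hdiag : Summable fun k => gammaTerm (M + 1) w k * gammaTerm M z k :=
    (summable_mul_of_summable_norm (summable_norm_gammaTerm hM' w)
      (summable_norm_gammaTerm hM z)).comp_injective (i := fun k => (k, k))
        fun _ _ h => congrArg Prod.fst h
  have hsum := (summable_norm_gammaTerm hM' w).of_norm.hasSum
  convert! (hsum.mul_left _).add ((htri.sub hdiag.hasSum).mul_left (2 * z)) using 2 with k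
  rw [deriv_const_mul_field, deriv_sum_gammaTerm hM]
  ring

theorem hasDerivAt_limitKernel {L : ℝ} (hM : 0 < M) (hL : 2 * L = M) (z w : ℂ) :
    HasDerivAt (limitKernel M · w) (Fo M L z w) z := by
  have hexp : HasDerivAt (fun v : ℂ => exp (-v ^ 2 - w ^ 2))
      (-(2 * z) * exp (-z ^ 2 - w ^ 2)) z := by
    convert! (((hasDerivAt_pow 2 z).neg).sub_const (w ^ 2)).cexp using 1
    norm_num
    ring
  have h := (hexp.const_mul (√Real.pi : ℂ)).mul
    ((hasDerivAt_triTsum_left hM z w).sub (hasDerivAt_triTsum_right hM z w))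
  refine h.congr_deriv ?_
  have hdiag := sqrt_pi_mul_tsum_diagonal hM z w
  have hb : deriv (gammaTerm M · 0) z = 2 * z ^ (M - 1) / Gamma L := by
    rw [(hasDerivAt_gammaTerm hM z 0).deriv, ← hL, Gamma_ofReal]
    simp
  have hP := (hasSum_gammaTerm_PLhalf hL w).tsum_eq
  have hsplit : exp (-(z - w) ^ 2) = exp (-z ^ 2 - w ^ 2) * exp (2 * z * w) := by
    rw [← Complex.exp_add]
    ring_nf
  have hsplit' : exp (-z ^ 2) = exp (-z ^ 2 - w ^ 2) * exp (w ^ 2) := by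
    rw [← Complex.exp_add]
    ring_nf
  rw [Fo, hsplit, hsplit', hb, hP]
  simp only [Pi.sub_apply]
  linear_combination exp (-z ^ 2 - w ^ 2) * hdiag

end LimitKernel

section GammaRatio

open Topology

/-- The ratio `Γ(x) / (Γ(x - k) a^k)`, which tends to `1` as `a → ∞` with `x - a` bounded. -/
def gammaRatio (x a : ℝ) (k : ℕ) : ℝ :=
  Real.Gamma x / (Real.Gamma (x - k) * a ^ k)

theorem gammaRatio_eq_prod {x : ℝ} {k : ℕ} (hk : k < x) (a : ℝ) :
    gammaRatio x a k = ∏ j ∈ range k, (x - 1 - j) / a := by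
  induction k with
  | zero =>
    have hΓ := (Real.Gamma_pos_of_pos (by simpa using hk)).ne'
    simp [gammaRatio, hΓ]
  | succ k ih =>
    push_cast at hk
    have hpos : 0 < x - 1 - k := by linarith
    rw [prod_range_succ, ← ih (by linarith), gammaRatio, gammaRatio,
      show x - (k : ℝ) = x - 1 - k + 1 by ring, Real.Gamma_add_one hpos.ne',
      show x - ((k + 1 : ℕ) : ℝ) = x - 1 - k by push_cast; ring]
    have hΓ := (Real.Gamma_pos_of_pos hpos).ne'
    rw [pow_succ]
    field_simp

theorem abs_gammaRatio_le_one {x a : ℝ} {k : ℕ} (hk : k < x) (hx : x ≤ a + 1) :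
    |gammaRatio x a k| ≤ 1 := by
  rw [gammaRatio_eq_prod hk, abs_prod]
  refine prod_le_one (fun j _ => abs_nonneg _) fun j hj => ?_
  have hj' : (j : ℝ) + 1 ≤ k := mod_cast mem_range.1 hj
  have ha : 0 < a := by linarith [j.cast_nonneg (α := ℝ)]
  rw [abs_of_nonneg (div_nonneg (by linarith) ha.le), div_le_one ha]
  linarith [j.cast_nonneg (α := ℝ)]

theorem tendsto_gammaRatio_add_const {ι : Type*} {l : Filter ι} {a : ι → ℝ}
    (ha : Tendsto a l atTop) (c : ℝ) (k : ℕ) :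
    Tendsto (fun i => gammaRatio (a i + c) (a i) k) l (𝓝 1) := by
  have hfactor (j : ℕ) : Tendsto (fun i => (a i + c - 1 - j) / a i) l (𝓝 1) := by
    have h := (ha.const_div_atTop (c - 1 - j)).const_add 1
    rw [add_zero] at h
    refine h.congr' ?_
    filter_upwards [ha.eventually_ne_atTop 0] with i hi
    field_simp
    ring
  have hprod := tendsto_finsetProd (range k) fun j _ => hfactor j
  rw [prod_const_one] at hprod
  refine hprod.congr' ?_
  filter_upwards [ha.eventually_gt_atTop (k - c)] with i hi
  rw [gammaRatio_eq_prod (by linarith)]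

end GammaRatio

section RescaledKernel

open Complex

/-- The term `gammaTerm m z k` with the finite-size correction `gammaRatio x a k`. -/
def dampedGammaTerm (x a : ℝ) (m : ℕ) (z : ℂ) (k : ℕ) : ℂ :=
  gammaRatio x a k * gammaTerm m z k

theorem differentiable_dampedGammaTerm (x a : ℝ) (m k : ℕ) :
    Differentiable ℂ (dampedGammaTerm x a m · k) :=
  (differentiable_gammaTerm m k).const_mul _

theorem gammaTerm_div_div_Gamma {x : ℝ} {s : ℂ} {a : ℝ} (hx : 0 < x) (hs : s ^ 2 = a) (ha : a ≠ 0)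
    (m : ℕ) (z : ℂ) (k : ℕ) :
    gammaTerm m (z / s) k / (Real.Gamma (x - k) : ℂ) =
      (Real.Gamma x * s ^ m : ℂ)⁻¹ * dampedGammaTerm x a m z k := by
  have hΓ : (Real.Gamma x : ℂ) ≠ 0 := mod_cast (Real.Gamma_pos_of_pos hx).ne'
  have hs₀ : s ≠ 0 := by
    rintro rfl
    simp [eq_comm, ha] at hs
  rw [dampedGammaTerm, gammaTerm, gammaTerm, gammaRatio, div_pow, pow_add s, pow_mul, hs]
  push_cast
  field_simp

theorem GK_eq_triSum {L : ℝ} {M : ℕ} (hL : 2 * L = M) (N : ℕ) (n : ℝ) (ζ η : ℂ) :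
    GK N n L ζ η = (Real.pi * Real.Gamma (2 * n + M + 2) / 2 ^ (2 * n + M + 1) : ℝ) *
      triSum N (fun k => gammaTerm (M + 1) ζ k / (Real.Gamma (n - k) : ℂ))
        (fun l => gammaTerm M η l / (Real.Gamma (n + 1 / 2 - l) : ℂ)) := by
  have htwo : (2 : ℂ) ^ ((2 * n + M + 1 : ℝ) : ℂ) = ((2 ^ (2 * n + M + 1) : ℝ) : ℂ) := by
    rw [ofReal_cpow zero_le_two, ofReal_ofNat]
  have hζ (k : ℕ) : ζ ^ ((2 * k + M + 1 : ℝ) : ℂ) = ζ ^ (2 * k + (M + 1)) := by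
    rw [← cpow_natCast]
    push_cast
    ring_nf
  have hη (l : ℕ) : η ^ ((2 * l + M : ℝ) : ℂ) = η ^ (2 * l + M) := by
    rw [← cpow_natCast]
    push_cast
    rfl
  have hζΓ (k : ℕ) : (k : ℝ) + L + 3 / 2 = k + (M + 1 : ℕ) / 2 + 1 := by
    push_cast
    linarith
  have hηΓ (l : ℕ) : (l : ℝ) + L + 1 = l + M / 2 + 1 := by linarith
  simp only [GK, triSum, gammaTerm, hL, htwo, hζ, hη, hζΓ, hηΓ, Gamma_ofReal, ofReal_mul,
    ofReal_div, mul_sum]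
  refine sum_congr rfl fun k _ => sum_congr rfl fun l _ => ?_
  rw [show n - l + 1 / 2 = n + 1 / 2 - l by ring]
  ring

theorem pi_mul_Gamma_div_two_rpow {n a : ℝ} (hn : 0 < n) (ha : a ≠ 0) (M : ℕ) :
    Real.pi * Real.Gamma (2 * n + M + 2) / 2 ^ (2 * n + M + 1) =
      √Real.pi * gammaRatio (2 * n + M + 2) (2 * a) (M + 2) * a ^ (M + 2) *
        (Real.Gamma n * Real.Gamma (n + 1 / 2)) := by
  have hΓ := (Real.Gamma_pos_of_pos (mul_pos two_pos hn)).ne'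
  have htwo : (2 : ℝ) ^ (2 * n + M + 1) * 2 ^ (1 - 2 * n) = 2 ^ (M + 2) := by
    rw [← Real.rpow_add two_pos, ← Real.rpow_natCast]
    push_cast
    ring_nf
  rw [Real.Gamma_mul_Gamma_add_half, gammaRatio,
    show 2 * n + M + 2 - ((M + 2 : ℕ) : ℝ) = 2 * n by push_cast; ring, mul_pow, ← htwo]
  field_simp
  rw [Real.sq_sqrt Real.pi_pos.le]

theorem triSum_const_mul {R : Type*} [CommSemiring R] (N : ℕ) (c d : R) (x y : ℕ → R) :
    triSum N (fun k => c * x k) (fun l => d * y l) = c * d * triSum N x y := by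
  simp only [triSum, ← mul_sum]
  rw [mul_sum]
  refine sum_congr rfl fun k _ => ?_
  ring

theorem GK_div {L n a : ℝ} {M : ℕ} {s : ℂ} (hL : 2 * L = M) (hn : 0 < n) (hs : s ^ 2 = a)
    (ha : a ≠ 0) (N : ℕ) (z w : ℂ) :
    GK N n L (z / s) (w / s) = s ^ 3 * (√Real.pi * gammaRatio (2 * n + M + 2) (2 * a) (M + 2) *
      triSum N (dampedGammaTerm n a (M + 1) z) (dampedGammaTerm (n + 1 / 2) a M w)) := by
  have hn' : 0 < n + 1 / 2 := by linarith
  have hΓ : (Real.Gamma n : ℂ) ≠ 0 := mod_cast (Real.Gamma_pos_of_pos hn).ne'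
  have hΓ' : (Real.Gamma (n + 1 / 2) : ℂ) ≠ 0 := mod_cast (Real.Gamma_pos_of_pos hn').ne'
  have hs₀ : s ≠ 0 := by
    rintro rfl
    simp [eq_comm, ha] at hs
  simp only [GK_eq_triSum hL, pi_mul_Gamma_div_two_rpow hn ha, gammaTerm_div_div_Gamma hn hs ha,
    gammaTerm_div_div_Gamma hn' hs ha, triSum_const_mul]
  generalize n + 1 / 2 = n' at *
  push_cast
  rw [← hs]
  field_simp
  ring

theorem resc_zero_eq {L n : ℝ} {M N : ℕ} (hL : 2 * L = M) (hN : 0 < N) (hn : 0 < n) (z w : ℂ) :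
    resc N n L 0 z w =
      ((1 + z ^ 2 / (n + L : ℝ)) * (1 + w ^ 2 / (n + L : ℝ))) ^ ((-(n + L - 1 / 2) : ℝ) : ℂ) *
      (√Real.pi * gammaRatio (2 * n + M + 2) (2 * (n + L)) (M + 2) *
        (triSum N (dampedGammaTerm n (n + L) (M + 1) z) (dampedGammaTerm (n + 1 / 2) (n + L) M w) -
        triSum N (dampedGammaTerm n (n + L) (M + 1) w)
          (dampedGammaTerm (n + 1 / 2) (n + L) M z))) := by
  have ha : 0 < n + L := by linarith [M.cast_nonneg (α := ℝ)]
  have hscale : N * dlt N n L 0 = n + L := by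
    rw [dlt, zero_pow two_ne_zero, add_zero, Real.one_rpow, mul_one,
      mul_div_cancel₀ _ (Nat.cast_pos.2 hN).ne']
  set s : ℝ := √(n + L) with hs
  have hs₀ : (s : ℂ) ≠ 0 := mod_cast (Real.sqrt_pos.2 ha).ne'
  have hs₂ : (s : ℂ) ^ 2 = (n + L : ℝ) := mod_cast Real.sq_sqrt ha.le
  have hpow : (n + L) ^ (-(3 / 2) : ℝ) = (s ^ 3)⁻¹ := by
    rw [hs, Real.sqrt_eq_rpow, ← Real.rpow_natCast, ← Real.rpow_mul ha.le, ← Real.rpow_neg ha.le]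
    norm_num
  rw [resc, sc, hscale, ← hs, hpow, KK]
  simp only [ofReal_zero, zero_add, GK_div hL hn hs₂ ha.ne', div_pow, hs₂]
  push_cast
  simp only [zero_pow two_ne_zero, add_zero, Real.one_rpow, ofReal_one]
  field_simp

end RescaledKernel

section Asymptotics

open Complex Topology

variable {ι : Type*} {l : Filter ι} {z w : ι → ℂ} {z₀ w₀ : ℂ}

theorem tendsto_dampedGammaTerm {a : ι → ℝ} (ha : Tendsto a l atTop) (hz : Tendsto z l (𝓝 z₀))
    (c : ℝ) (m k : ℕ) :
    Tendsto (fun i => dampedGammaTerm (a i + c) (a i) m (z i) k) l (𝓝 (gammaTerm m z₀ k)) := by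
  have hratio := (continuous_ofReal.tendsto 1).comp (tendsto_gammaRatio_add_const ha c k)
  have hterm := ((differentiable_gammaTerm m k).continuous.tendsto z₀).comp hz
  have h := hratio.mul hterm
  rw [ofReal_one, one_mul] at h
  exact h

theorem eventually_norm_dampedGammaTerm_le {N : ι → ℕ} {x a : ι → ℝ} (hN : ∀ᶠ i in l, N i ≤ x i)
    (hx : ∀ᶠ i in l, x i ≤ a i + 1) (hz : Tendsto z l (𝓝 z₀)) (m : ℕ) :
    ∀ᶠ i in l, ∀ k < N i,
      ‖dampedGammaTerm (x i) (a i) m (z i) k‖ ≤ ‖gammaTerm m (‖z₀‖ + 1 : ℝ) k‖ := by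
  have hball : ∀ᶠ i in l, z i ∈ Metric.ball 0 (‖z₀‖ + 1) :=
    hz.eventually_mem (Metric.isOpen_ball.mem_nhds (by simp))
  filter_upwards [hN, hx, hball] with i hNi hxi hzi k hk
  have hkx : k < x i := (Nat.cast_lt.2 hk).trans_le hNi
  rw [dampedGammaTerm, norm_mul, norm_real]
  exact (mul_le_of_le_one_left (norm_nonneg _) (abs_gammaRatio_le_one hkx hxi)).trans
    (norm_gammaTerm_le_of_mem_ball hzi m k)

variable {N : ι → ℕ} {n : ι → ℝ} {L : ℝ} {M : ℕ}

theorem tendsto_triSum_dampedGammaTerm (hL : -(1 / 2) ≤ L) (hM : 0 < M) (hN : Tendsto N l atTop)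
    (hn : ∀ᶠ i in l, N i ≤ n i) (ha : Tendsto (fun i => n i + L) l atTop)
    (hz : Tendsto z l (𝓝 z₀)) (hw : Tendsto w l (𝓝 w₀)) :
    Tendsto (fun i => triSum (N i) (dampedGammaTerm (n i) (n i + L) (M + 1) (z i))
      (dampedGammaTerm (n i + 1 / 2) (n i + L) M (w i))) l
      (𝓝 (triTsum (gammaTerm (M + 1) z₀) (gammaTerm M w₀))) := by
  have hn' : ∀ᶠ i in l, N i ≤ n i + 1 / 2 := hn.mono fun i hi => by linarith
  refine tendsto_triSum hN (fun k => ?_) (fun k => ?_) (summable_norm_gammaTerm M.succ_pos _)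
    (summable_norm_gammaTerm hM _)
    (eventually_norm_dampedGammaTerm_le hn (.of_forall fun i => by linarith) hz _)
    (eventually_norm_dampedGammaTerm_le hn' (.of_forall fun i => by linarith) hw _)
  · simpa only [add_neg_cancel_right] using tendsto_dampedGammaTerm ha hz (-L) (M + 1) k
  · simpa only [add_add_sub_cancel] using tendsto_dampedGammaTerm ha hw (1 / 2 - L) M k

theorem tendsto_resc_zero (hL : 2 * L = M) (hM : 0 < M) (hN : Tendsto N l atTop)
    (hn : ∀ᶠ i in l, N i ≤ n i) (hz : Tendsto z l (𝓝 z₀)) (hw : Tendsto w l (𝓝 w₀)) :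
    Tendsto (fun i => resc (N i) (n i) L 0 (z i) (w i)) l (𝓝 (limitKernel M z₀ w₀)) := by
  have hL₀ : -(1 / 2) ≤ L := by linarith [M.cast_nonneg (α := ℝ)]
  have ha : Tendsto (fun i => n i + L) l atTop := tendsto_atTop_add_const_right _ L
    (tendsto_atTop_mono' l hn (tendsto_natCast_atTop_atTop.comp hN))
  have hprefactor : Tendsto (fun i => (gammaRatio (2 * n i + M + 2) (2 * (n i + L)) (M + 2) : ℂ)) l
      (𝓝 1) := by
    have h := tendsto_gammaRatio_add_const (ha.const_mul_atTop two_pos) 2 (M + 2)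
    simpa only [mul_add, hL, ofReal_one] using! (continuous_ofReal.tendsto 1).comp h
  have hskew := (tendsto_triSum_dampedGammaTerm hL₀ hM hN hn ha hz hw).sub
    (tendsto_triSum_dampedGammaTerm hL₀ hM hN hn ha hw hz)
  have h := (tendsto_one_add_sq_div_mul_cpow ha hz hw).mul
    ((hprefactor.const_mul (√Real.pi : ℂ)).mul hskew)
  rw [mul_one, ← mul_assoc, mul_comm (exp _), ← limitKernel] at h
  refine h.congr' ?_
  filter_upwards [hN.eventually_gt_atTop 0, hn] with i hNi hni
  rw [resc_zero_eq hL hNi ((Nat.cast_pos.2 hNi).trans_le hni)]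

theorem differentiable_triSum {x y : ℂ → ℕ → ℂ} (N : ℕ) (hx : ∀ k, Differentiable ℂ (x · k))
    (hy : ∀ k, Differentiable ℂ (y · k)) : Differentiable ℂ fun v => triSum N (x v) (y v) :=
  Differentiable.fun_sum fun k _ => (hx k).mul (Differentiable.fun_sum fun l _ => hy l)

theorem eventually_differentiableAt_resc_zero (hL : 2 * L = M) (hN : Tendsto N l atTop)
    (hn : ∀ᶠ i in l, N i ≤ n i) (hz : Tendsto z l (𝓝 z₀)) (hw : Tendsto w l (𝓝 w₀)) :
    ∀ᶠ i in l, DifferentiableAt ℂ (fun v => resc (N i) (n i) L 0 v (w i)) (z i) := by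
  have ha : Tendsto (fun i => n i + L) l atTop := tendsto_atTop_add_const_right _ L
    (tendsto_atTop_mono' l hn (tendsto_natCast_atTop_atTop.comp hN))
  have hslit := (tendsto_one_add_sq_div_mul ha hz hw).eventually_mem
    (isOpen_slitPlane.mem_nhds one_mem_slitPlane)
  filter_upwards [hN.eventually_gt_atTop 0, hn, hslit] with i hNi hni hi
  have hfun := funext fun v => resc_zero_eq hL hNi ((Nat.cast_pos.2 hNi).trans_le hni) v (w i)
  rw [hfun]
  have hsum := differentiable_triSum (N i)
    (differentiable_dampedGammaTerm (n i) (n i + L) (M + 1))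
    (fun k => differentiable_const (dampedGammaTerm (n i + 1 / 2) (n i + L) M (w i) k))
  have hsum' := differentiable_triSum (N i)
    (fun k => differentiable_const (dampedGammaTerm (n i) (n i + L) (M + 1) (w i) k))
    (differentiable_dampedGammaTerm (n i + 1 / 2) (n i + L) M)
  have hbase : DifferentiableAt ℂ
      (fun v : ℂ => (1 + v ^ 2 / (n i + L : ℝ)) * (1 + w i ^ 2 / (n i + L : ℝ))) (z i) := by
    fun_prop
  exact (hbase.cpow_const hi).mul ((hsum.sub hsum').const_mul _).differentiableAt

theorem tendsto_deriv_resc_zero [l.NeBot] (hL : 2 * L = M) (hM : 0 < M) (hN : Tendsto N l atTop)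
    (hn : ∀ᶠ i in l, N i ≤ n i) (z₀ : ℂ) (hw : Tendsto w l (𝓝 w₀)) :
    Tendsto (fun p : ι × ℂ => deriv (fun v => resc (N p.1) (n p.1) L 0 v (w p.1)) p.2)
      (l ×ˢ 𝓝 z₀) (𝓝 (Fo M L z₀ w₀)) := by
  have h := tendsto_deriv_prod_nhds (F := fun i v => resc (N i) (n i) L 0 v (w i)) (z₀ := z₀)
    (fun z => tendsto_resc_zero hL hM (hN.comp tendsto_fst) (tendsto_fst.eventually hn)
      tendsto_snd (hw.comp tendsto_fst))
    (eventually_differentiableAt_resc_zero hL (hN.comp tendsto_fst) (tendsto_fst.eventually hn)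
      tendsto_snd (hw.comp tendsto_fst))
  rwa [(hasDerivAt_limitKernel hM hL z₀ w₀).deriv] at h

theorem CD_asymptotics_origin_general (L : ℝ) (M : ℕ) (hM : 2 * L = M) (hM1 : 1 ≤ M) {n : ℕ → ℝ}
    (hn : ∀ᶠ N : ℕ in atTop, N ≤ n N) :
    TendstoLocallyUniformly
      (fun (N : ℕ) (q : ℂ × ℂ) => deriv (fun z => resc N (n N) L 0 z q.2) q.1)
      (fun q => Fo M L q.1 q.2) atTop := by
  refine tendstoLocallyUniformly_of_forall_tendsto_prod_nhds fun ⟨z₀, w₀⟩ => ?_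
  have hderiv := tendsto_deriv_resc_zero (l := atTop ×ˢ 𝓝 w₀) hM hM1 tendsto_fst
    (tendsto_fst.eventually hn) z₀ tendsto_snd
  have hq : Tendsto (fun p : ℕ × ℂ × ℂ => ((p.1, p.2.2), p.2.1)) (atTop ×ˢ 𝓝 (z₀, w₀))
      ((atTop ×ˢ 𝓝 w₀) ×ˢ 𝓝 z₀) :=
    (tendsto_fst.prodMk ((continuous_snd.tendsto (z₀, w₀)).comp tendsto_snd)).prodMk
      ((continuous_fst.tendsto (z₀, w₀)).comp tendsto_snd)
  simpa only [Function.comp_def] using hderiv.comp hq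

end Asymptotics

/-- Proposition 2.2(c): large-`N` expansion of the Christoffel–Darboux
identity at the singular origin (zooming point `p = 0`, `2L = M` a positive integer). -/
theorem CD_asymptotics_origin (b L : ℝ) (hb : 0 < b) (M : ℕ) (hM : 2*L = (M : ℝ))
    (hM1 : 1 ≤ M) (K : Set (ℂ × ℂ)) (hK : IsCompact K) :
    TendstoUniformlyOn
      (fun (N : ℕ) (q : ℂ × ℂ) => deriv (fun z => resc N ((b+1)*N) L 0 z q.2) q.1)
      (fun q => Fo M L q.1 q.2) (atTop ⊓ 𝓟 (Ssing b)) K := by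
  have hn (N : ℕ) : (N : ℝ) ≤ (b + 1) * N := le_mul_of_one_le_left N.cast_nonneg (by linarith)
  have h := tendstoLocallyUniformly_iff_forall_isCompact.1
    (CD_asymptotics_origin_general L M hM hM1 (.of_forall hn)) K hK
  exact fun u hu => (h u hu).filter_mono inf_le_left

end SI
end
end

section
/- Solution of the limiting differential equation in the strong non-unitarity regime (Lemma 2.3(a)). Fix w ∈ ℂ. (i) The function z ↦ K_s^{bulk}(z,w) := e^{−z²−w²} κ_s^{bulk}(z,w) satisfies K_s^{bulk}(w,w) = 0 and, for every z ∈ ℂ, its complex derivative in z equals 2 e^{−(z−w)²}. (ii) The function z ↦ K_s^{edge}(z,w) := e^{−z²−w²} κ_s^{edge}(z,w) satisfies K_s^{edge}(w,w) = 0 and, for every z ∈ ℂ, its complex derivative in z equals e^{−(z−w)²} erfc(z+w) − (1/√2) e^{−2z²} erfc(√2 w). -/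
open MeasureTheory Filter Finset

noncomputable section

namespace SI

/-- The entire extension of the error function: `erf(z) = (2/√π)∫₀¹ z e^{-s²z²} ds`. -/
def cerf (z : ℂ) : ℂ :=
  (2 / (Real.sqrt Real.pi : ℂ)) * ∫ s in (0:ℝ)..1, z * Complex.exp (-((s:ℂ)^2 * z^2))

/-- `erfc(z) = 1 - erf(z)`. -/
def cerfc (z : ℂ) : ℂ := 1 - cerf z

/-- `f_z(u) = (1/2) erfc(√2 (z-u))`. -/
def fz (z : ℂ) (u : ℝ) : ℂ := (1/2) * cerfc ((Real.sqrt 2 : ℂ) * (z - (u:ℂ)))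

/-- The Wronskian `W(f_w, f_z)(u) = f_w(u) f_z'(u) - f_z(u) f_w'(u)` (derivative in `u`). -/
def Wr (w z : ℂ) (u : ℝ) : ℂ := fz w u * deriv (fz z) u - fz z u * deriv (fz w) u

/-- The bulk limiting kernel `κ_s^{bulk}`. -/
def kbulk (z w : ℂ) : ℂ :=
  (Real.sqrt Real.pi : ℂ) * Complex.exp (z^2+w^2) * ∫ u : ℝ, Wr w z u

/-- The edge limiting kernel `κ_s^{edge}`. -/
def kedge (z w : ℂ) : ℂ :=
  (Real.sqrt Real.pi : ℂ) * Complex.exp (z^2+w^2) * ∫ u in Set.Iio (0:ℝ), Wr w z u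

/-- The bulk inhomogeneous term `F_s` (bulk case). -/
def Fsbulk (z w : ℂ) : ℂ := 2 * Complex.exp (-(z-w)^2)

/-- The edge inhomogeneous term `F_s` (edge case). -/
def Fsedge (z w : ℂ) : ℂ :=
  Complex.exp (-(z-w)^2) * cerfc (z+w)
    - (1/(Real.sqrt 2 : ℂ)) * Complex.exp (-2*z^2) * cerfc ((Real.sqrt 2 : ℂ) * w)

/-!
Write `f_z' = ∂_u f_z`. Since `f_z(u)` is a function of `z - u`, also `∂_z f_z = -f_z'`. As
`W(f_w, f_z) = (f_w f_z)' - 2 f_z f_w'` and `f_z` runs from `0` at `-∞` to `1` at `+∞`, integrating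
over `(-∞, a]` gives `f_w(a) f_z(a) - 2 ∫ f_z f_w'`, and over the line `1 - 2 ∫ f_z f_w'`. Now `z`
enters the integrand only through `f_z`, so differentiating under the integral sign needs nothing
but a bound on `f_z'` that is locally uniform in `z`, and it produces `2 ∫ f_z' f_w'`. Completing
the square, `f_z' f_w'` is `e^{-(z-w)²}` times a Gaussian in `z + w - 2u`, whose primitive is an
`erfc`.
-/

open scoped Real Topology

section Primitive

variable {E : Type*} [NormedAddCommGroup E] [NormedSpace ℂ E] [CompleteSpace E]

theorem hasDerivAt_smul_integral_segment {f : ℂ → E} (hf : Differentiable ℂ f) (c z : ℂ) :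
    HasDerivAt (fun z ↦ (z - c) • ∫ t in (0 : ℝ)..1, f (c + t • (z - c))) (f z) z := by
  obtain ⟨F, hF⟩ := hf.isExactOn_univ
  have integral_eq (x : ℂ) :
      (x - c) • ∫ t in (0 : ℝ)..1, f (c + t • (x - c)) = F x - F c := by
    have hcont : Continuous fun t : ℝ ↦ f (c + t • (x - c)) :=
      hf.continuous.comp (by fun_prop)
    simpa only [add_sub_cancel] using
      intervalIntegral.integral_unitInterval_deriv_eq_sub hcont.continuousOn
        fun t _ ↦ hF _ (Set.mem_univ _)
  simpa only [integral_eq] using (hF z (Set.mem_univ z)).sub_const (F c)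

end Primitive

theorem norm_cexp_neg_mul_sub_sq_le {b : ℝ} (hb : 0 ≤ b) (z : ℂ) (u : ℝ) :
    ‖Complex.exp (-b * (z - u) ^ 2)‖ ≤ Real.exp (b * ‖z‖ ^ 2) * Real.exp (-(b / 2) * u ^ 2) := by
  have re_eq : (-b * (z - u) ^ 2 : ℂ).re = b * (z.im ^ 2 - (z.re - u) ^ 2) := by
    simp only [pow_two, neg_mul, Complex.neg_re, Complex.mul_re, Complex.ofReal_re,
      Complex.sub_re, Complex.sub_im, Complex.ofReal_im, sub_zero, Complex.mul_im, zero_mul]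
    ring
  have norm_sq : ‖z‖ ^ 2 = z.re ^ 2 + z.im ^ 2 := by
    rw [Complex.sq_norm, Complex.normSq_apply]; ring
  rw [Complex.norm_exp, ← Real.exp_add, Real.exp_le_exp, re_eq, norm_sq]
  linear_combination (b / 2) * sq_nonneg (u - 2 * z.re)

section ErrorFunction

theorem ofReal_sqrt_pi_ne_zero : (√π : ℂ) ≠ 0 := by
  exact_mod_cast Real.sqrt_ne_zero'.mpr Real.pi_pos

theorem ofReal_sqrt_two_sq : (√2 : ℂ) ^ 2 = 2 := by
  exact_mod_cast Real.sq_sqrt zero_le_two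

theorem hasDerivAt_cerf (z : ℂ) :
    HasDerivAt cerf (2 / √π * Complex.exp (-z ^ 2)) z := by
  have h := (hasDerivAt_smul_integral_segment
    (f := fun x ↦ Complex.exp (-x ^ 2)) (by fun_prop) 0 z).const_mul (2 / √π : ℂ)
  refine h.congr_of_eventuallyEq (.of_forall fun x ↦ ?_)
  simp [cerf, mul_pow]

theorem cerf_neg (z : ℂ) : cerf (-z) = -cerf z := by
  simp [cerf]

theorem tendsto_cerf_ofReal_atTop : Tendsto (fun t : ℝ ↦ cerf t) atTop (𝓝 1) := by
  have substitution (t : ℝ) : t * ∫ s in (0 : ℝ)..1, Real.exp (-1 * (s * t) ^ 2) =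
      ∫ x in (0 : ℝ)..t, Real.exp (-1 * x ^ 2) := by
    simpa only [zero_mul, one_mul] using intervalIntegral.mul_integral_comp_mul_right
      (f := fun x ↦ Real.exp (-1 * x ^ 2)) (a := 0) (b := 1) t
  have cerf_ofReal (t : ℝ) :
      cerf t = ((2 / √π * ∫ x in (0 : ℝ)..t, Real.exp (-1 * x ^ 2) : ℝ) : ℂ) := by
    rw [← substitution]
    simp [cerf, ← intervalIntegral.integral_ofReal, mul_pow]
  have tendsto_integral := intervalIntegral_tendsto_integral_Ioi (0 : ℝ)
    (integrable_exp_neg_mul_sq one_pos).integrableOn tendsto_id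
  rw [integral_gaussian_Ioi, div_one] at tendsto_integral
  have limit_eq : 2 / √π * (√π / 2) = 1 := by
    field
  simpa [cerf_ofReal, Function.comp_def, limit_eq, -Complex.ofReal_mul] using
    (Complex.continuous_ofReal.tendsto _).comp (tendsto_integral.const_mul (2 / √π))

theorem tendsto_cerf_add_sub_cerf_atTop (a : ℂ) :
    Tendsto (fun t : ℝ ↦ cerf (a + t) - cerf t) atTop (𝓝 0) := by
  set C : ℝ := ‖(2 / √π : ℂ)‖ * Real.exp (‖a‖ ^ 2)
  have deriv_le (t : ℝ) {y : ℂ} (hy : y ∈ Metric.closedBall 0 ‖a‖) :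
      ‖2 / √π * Complex.exp (-(y + t) ^ 2)‖ ≤ C * Real.exp (-(1 / 2) * t ^ 2) := by
    rw [mem_closedBall_zero_iff] at hy
    have gaussian_le := norm_cexp_neg_mul_sub_sq_le zero_le_one y (-t)
    simp only [Complex.ofReal_one, neg_one_mul, Complex.ofReal_neg, sub_neg_eq_add, one_mul,
      neg_sq] at gaussian_le
    rw [norm_mul, mul_assoc]
    gcongr
    exact gaussian_le.trans (by gcongr)
  have diff_le (t : ℝ) :
      ‖cerf (a + t) - cerf t‖ ≤ C * Real.exp (-(1 / 2) * t ^ 2) * ‖a‖ := by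
    simpa using (convex_closedBall (0 : ℂ) ‖a‖).norm_image_sub_le_of_norm_hasDerivWithin_le
      (fun y _ ↦ ((hasDerivAt_cerf (y + t)).comp_add_const y t).hasDerivWithinAt)
      (fun y hy ↦ deriv_le t hy) (x := 0) (y := a) (by simp) (by simp)
  have exp_tendsto : Tendsto (fun t : ℝ ↦ Real.exp (-(1 / 2) * t ^ 2)) atTop (𝓝 0) :=
    Real.tendsto_exp_atBot.comp
      ((tendsto_pow_atTop two_ne_zero).const_mul_atTop_of_neg (by norm_num))
  refine squeeze_zero_norm diff_le ?_
  simpa using (exp_tendsto.const_mul C).mul_const ‖a‖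

theorem tendsto_cerf_add_atTop (a : ℂ) :
    Tendsto (fun t : ℝ ↦ cerf (a + t)) atTop (𝓝 1) := by
  simpa using (tendsto_cerf_add_sub_cerf_atTop a).add tendsto_cerf_ofReal_atTop

theorem tendsto_cerfc_sub_mul_atBot (c : ℂ) {k : ℝ} (hk : 0 < k) :
    Tendsto (fun u : ℝ ↦ cerfc (c - k * u)) atBot (𝓝 0) := by
  have h := ((tendsto_cerf_add_atTop c).comp
    (tendsto_id.const_mul_atBot_of_neg (neg_lt_zero.mpr hk))).const_sub 1
  simpa [cerfc, Function.comp_def, ← sub_eq_add_neg] using h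

theorem tendsto_cerfc_sub_mul_atTop (c : ℂ) {k : ℝ} (hk : 0 < k) :
    Tendsto (fun u : ℝ ↦ cerfc (c - k * u)) atTop (𝓝 2) := by
  have h := ((tendsto_cerf_add_atTop (-c)).comp (tendsto_id.const_mul_atTop hk)).const_add 1
  rw [one_add_one_eq_two] at h
  refine h.congr fun u ↦ ?_
  simp [cerfc, sub_eq_neg_add, ← cerf_neg, add_comm]

theorem hasDerivAt_cerfc (z : ℂ) :
    HasDerivAt cerfc (-(2 / √π * Complex.exp (-z ^ 2))) z :=
  (hasDerivAt_cerf z).const_sub 1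

theorem hasDerivAt_cerfc_sub_mul (c k : ℂ) (u : ℝ) :
    HasDerivAt (fun u : ℝ ↦ cerfc (c - k * u))
      (2 * k / √π * Complex.exp (-(c - k * u) ^ 2)) u := by
  have linear : HasDerivAt (fun x : ℂ ↦ c - k * x) (-k) u := by
    simpa using ((hasDerivAt_id (u : ℂ)).const_mul k).const_sub c
  refine ((hasDerivAt_cerfc _).comp (u : ℂ) linear).comp_ofReal.congr_deriv ?_
  ring

end ErrorFunction

section Profile

/-- The derivative `f_z'(u) = √(2/π) e^{-2(z-u)²}` of `f_z`. Since `f_z(u)` depends only on `z - u`,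
this is also `-∂f_z(u)/∂z`. -/
def fzDeriv (z : ℂ) (u : ℝ) : ℂ := √2 / √π * Complex.exp (-2 * (z - u) ^ 2)

theorem fz_eq_cerfc_sub_mul (z : ℂ) :
    fz z = fun u : ℝ ↦ 1 / 2 * cerfc (√2 * z - √2 * u) := by
  simp only [funext_iff, fz, mul_sub, implies_true]

theorem hasDerivAt_fz (z : ℂ) (u : ℝ) : HasDerivAt (fz z) (fzDeriv z u) u := by
  rw [fz_eq_cerfc_sub_mul]
  refine ((hasDerivAt_cerfc_sub_mul (√2 * z) √2 u).const_mul (1 / 2)).congr_deriv ?_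
  rw [fzDeriv, ← mul_sub, mul_pow, ofReal_sqrt_two_sq]
  ring_nf

theorem hasDerivAt_fz_left (z : ℂ) (u : ℝ) : HasDerivAt (fun z ↦ fz z u) (-fzDeriv z u) z := by
  have linear : HasDerivAt (fun z : ℂ ↦ √2 * (z - u)) √2 z := by
    simpa using ((hasDerivAt_id z).sub_const (u : ℂ)).const_mul (√2 : ℂ)
  refine (((hasDerivAt_cerfc _).comp z linear).const_mul (1 / 2)).congr_deriv ?_
  rw [fzDeriv, mul_pow, ofReal_sqrt_two_sq]
  ring_nf

theorem tendsto_fz_atBot (z : ℂ) : Tendsto (fz z) atBot (𝓝 0) := by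
  simpa [fz_eq_cerfc_sub_mul] using
    (tendsto_cerfc_sub_mul_atBot (√2 * z) (Real.sqrt_pos.mpr zero_lt_two)).const_mul (1 / 2 : ℂ)

theorem tendsto_fz_atTop (z : ℂ) : Tendsto (fz z) atTop (𝓝 1) := by
  simpa [fz_eq_cerfc_sub_mul] using
    (tendsto_cerfc_sub_mul_atTop (√2 * z) (Real.sqrt_pos.mpr zero_lt_two)).const_mul (1 / 2 : ℂ)

theorem continuous_fz (z : ℂ) : Continuous (fz z) :=
  continuous_iff_continuousAt.mpr fun u ↦ (hasDerivAt_fz z u).continuousAt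

theorem exists_norm_fz_le (z : ℂ) : ∃ C, ∀ u, ‖fz z u‖ ≤ C := by
  have bounded : Bornology.IsBounded (Set.range (fz z)) :=
    (continuous_fz z).isBounded_range_iff_isBigO_atTop_atBot.mpr
      ⟨(tendsto_fz_atTop z).isBigO_one ℝ, (tendsto_fz_atBot z).isBigO_one ℝ⟩
  simpa using bounded.exists_norm_le

theorem continuous_fzDeriv (z : ℂ) : Continuous (fzDeriv z) := by
  unfold fzDeriv
  fun_prop

theorem integrable_fzDeriv (z : ℂ) : Integrable (fzDeriv z) := by
  have h := (integrable_cexp_quadratic' (b := -2) (by norm_num) (4 * z) (-2 * z ^ 2)).const_mul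
    (√2 / √π : ℂ)
  refine h.congr (ae_of_all _ fun u ↦ ?_)
  simp only [fzDeriv]
  ring_nf

theorem norm_fzDeriv_le (z : ℂ) (u : ℝ) :
    ‖fzDeriv z u‖ ≤ ‖(√2 / √π : ℂ)‖ * Real.exp (2 * ‖z‖ ^ 2) := by
  rw [fzDeriv, norm_mul]
  gcongr
  have gaussian_le := norm_cexp_neg_mul_sub_sq_le zero_le_two z u
  rw [Complex.ofReal_ofNat] at gaussian_le
  refine gaussian_le.trans (mul_le_of_le_one_right (Real.exp_pos _).le ?_)
  rw [Real.exp_le_one_iff]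
  linear_combination sq_nonneg u

variable {μ : Measure ℝ} {g : ℝ → ℂ}

theorem integrable_fz_mul (hg : Integrable g μ) (z : ℂ) :
    Integrable (fun u ↦ fz z u * g u) μ := by
  obtain ⟨C, hC⟩ := exists_norm_fz_le z
  exact hg.bdd_mul (continuous_fz z).aestronglyMeasurable (ae_of_all _ hC)

theorem hasDerivAt_integral_fz_mul (hg : Integrable g μ) (z : ℂ) :
    HasDerivAt (fun z ↦ ∫ u, fz z u * g u ∂μ) (-∫ u, fzDeriv z u * g u ∂μ) z := by
  set C : ℝ := ‖(√2 / √π : ℂ)‖ * Real.exp (2 * (‖z‖ + 1) ^ 2)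
  have deriv_le (u : ℝ) (x : ℂ) (hx : x ∈ Metric.ball z 1) :
      ‖-fzDeriv x u * g u‖ ≤ C * ‖g u‖ := by
    have hx' : ‖x‖ ≤ ‖z‖ + 1 := (norm_lt_of_mem_ball hx).le
    rw [norm_mul, norm_neg]
    gcongr
    exact (norm_fzDeriv_le x u).trans (by unfold C; gcongr)
  have h := (hasDerivAt_integral_of_dominated_loc_of_deriv_le (Metric.ball_mem_nhds z one_pos)
    (.of_forall fun x ↦ (integrable_fz_mul hg x).aestronglyMeasurable) (integrable_fz_mul hg z)
    ((continuous_fzDeriv z).neg.aestronglyMeasurable.mul hg.aestronglyMeasurable)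
    (ae_of_all _ deriv_le) (hg.norm.const_mul C)
    (ae_of_all _ fun u x _ ↦ (hasDerivAt_fz_left x u).mul_const (g u))).2
  simpa only [neg_mul, integral_neg, Pi.neg_apply] using h

end Profile

section GaussianProduct

theorem integrable_fzDeriv_mul_fzDeriv (z w : ℂ) :
    Integrable (fun u ↦ fzDeriv z u * fzDeriv w u) :=
  (integrable_fzDeriv w).bdd_mul (continuous_fzDeriv z).aestronglyMeasurable
    (ae_of_all _ (norm_fzDeriv_le z))

theorem hasDerivAt_fzDeriv_mul_fzDeriv_primitive (z w : ℂ) (u : ℝ) :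
    HasDerivAt (fun u : ℝ ↦ Complex.exp (-(z - w) ^ 2) / (2 * √π) * cerfc (z + w - 2 * u))
      (fzDeriv z u * fzDeriv w u) u := by
  refine ((hasDerivAt_cerfc_sub_mul (z + w) 2 u).const_mul _).congr_deriv ?_
  have exp_mul : Complex.exp (-2 * (z - u) ^ 2) * Complex.exp (-2 * (w - u) ^ 2) =
      Complex.exp (-(z - w) ^ 2) * Complex.exp (-(z + w - 2 * u) ^ 2) := by
    rw [← Complex.exp_add, ← Complex.exp_add]
    ring_nf
  calc
    _ = 2 / √π ^ 2 * (Complex.exp (-(z - w) ^ 2) * Complex.exp (-(z + w - 2 * u) ^ 2)) := by ring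
    _ = √2 ^ 2 / √π ^ 2 * (Complex.exp (-2 * (z - u) ^ 2) * Complex.exp (-2 * (w - u) ^ 2)) := by
      rw [ofReal_sqrt_two_sq, exp_mul]
    _ = fzDeriv z u * fzDeriv w u := by rw [fzDeriv, fzDeriv]; ring

theorem integral_Iic_fzDeriv_mul_fzDeriv (z w : ℂ) (a : ℝ) :
    ∫ u in Set.Iic a, fzDeriv z u * fzDeriv w u =
      Complex.exp (-(z - w) ^ 2) / (2 * √π) * cerfc (z + w - 2 * a) := by
  have limit := (tendsto_cerfc_sub_mul_atBot (z + w) two_pos).const_mul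
    (Complex.exp (-(z - w) ^ 2) / (2 * √π))
  rw [mul_zero] at limit
  simpa using integral_Iic_of_hasDerivAt_of_tendsto'
    (fun u _ ↦ hasDerivAt_fzDeriv_mul_fzDeriv_primitive z w u)
    (integrable_fzDeriv_mul_fzDeriv z w).integrableOn limit

theorem integral_fzDeriv_mul_fzDeriv (z w : ℂ) :
    ∫ u, fzDeriv z u * fzDeriv w u = Complex.exp (-(z - w) ^ 2) / √π := by
  rw [integral_of_hasDerivAt_of_tendsto (hasDerivAt_fzDeriv_mul_fzDeriv_primitive z w)
    (integrable_fzDeriv_mul_fzDeriv z w)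
    ((tendsto_cerfc_sub_mul_atBot (z + w) two_pos).const_mul _)
    ((tendsto_cerfc_sub_mul_atTop (z + w) two_pos).const_mul _)]
  field

end GaussianProduct

section Wronskian

theorem Wr_self (w : ℂ) (u : ℝ) : Wr w w u = 0 :=
  sub_self _

theorem hasDerivAt_fz_mul_fz (w z : ℂ) (u : ℝ) :
    HasDerivAt (fun u ↦ fz w u * fz z u) (fz w u * fzDeriv z u + fz z u * fzDeriv w u) u :=
  ((hasDerivAt_fz w u).mul (hasDerivAt_fz z u)).congr_deriv (by ring)

theorem integrable_fz_mul_fzDeriv_add (w z : ℂ) :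
    Integrable fun u ↦ fz w u * fzDeriv z u + fz z u * fzDeriv w u :=
  (integrable_fz_mul (integrable_fzDeriv z) w).add (integrable_fz_mul (integrable_fzDeriv w) z)

theorem tendsto_fz_mul_fz_atBot (w z : ℂ) :
    Tendsto (fun u ↦ fz w u * fz z u) atBot (𝓝 0) := by
  simpa using (tendsto_fz_atBot w).mul (tendsto_fz_atBot z)

theorem tendsto_fz_mul_fz_atTop (w z : ℂ) :
    Tendsto (fun u ↦ fz w u * fz z u) atTop (𝓝 1) := by
  simpa using (tendsto_fz_atTop w).mul (tendsto_fz_atTop z)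

theorem setIntegral_Wr (w z : ℂ) (s : Set ℝ) :
    ∫ u in s, Wr w z u =
      (∫ u in s, (fz w u * fzDeriv z u + fz z u * fzDeriv w u)) -
        2 * ∫ u in s, fz z u * fzDeriv w u := by
  rw [← integral_const_mul, ← integral_sub (integrable_fz_mul_fzDeriv_add w z).integrableOn
    ((integrable_fz_mul (integrable_fzDeriv w) z).const_mul 2).integrableOn]
  congr with u
  rw [Wr, (hasDerivAt_fz z u).deriv, (hasDerivAt_fz w u).deriv]
  ring

theorem integral_Iic_Wr (w z : ℂ) (a : ℝ) :
    ∫ u in Set.Iic a, Wr w z u =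
      fz w a * fz z a - 2 * ∫ u in Set.Iic a, fz z u * fzDeriv w u := by
  rw [setIntegral_Wr, integral_Iic_of_hasDerivAt_of_tendsto'
    (fun u _ ↦ hasDerivAt_fz_mul_fz w z u) (integrable_fz_mul_fzDeriv_add w z).integrableOn
    (tendsto_fz_mul_fz_atBot w z), sub_zero]

theorem integral_Wr (w z : ℂ) :
    ∫ u, Wr w z u = 1 - 2 * ∫ u, fz z u * fzDeriv w u := by
  rw [← setIntegral_univ, setIntegral_Wr]
  simp only [setIntegral_univ]
  rw [integral_of_hasDerivAt_of_tendsto (hasDerivAt_fz_mul_fz w z)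
    (integrable_fz_mul_fzDeriv_add w z) (tendsto_fz_mul_fz_atBot w z)
    (tendsto_fz_mul_fz_atTop w z), sub_zero]

theorem hasDerivAt_integral_Iic_Wr (w z : ℂ) (a : ℝ) :
    HasDerivAt (fun z ↦ ∫ u in Set.Iic a, Wr w z u)
      (Complex.exp (-(z - w) ^ 2) / √π * cerfc (z + w - 2 * a) - fz w a * fzDeriv z a) z := by
  simp only [integral_Iic_Wr]
  refine (((hasDerivAt_fz_left z a).const_mul (fz w a)).sub ((hasDerivAt_integral_fz_mul
    (integrable_fzDeriv w).integrableOn z).const_mul 2)).congr_deriv ?_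
  rw [integral_Iic_fzDeriv_mul_fzDeriv]
  field

theorem hasDerivAt_integral_Wr (w z : ℂ) :
    HasDerivAt (fun z ↦ ∫ u, Wr w z u) (2 * Complex.exp (-(z - w) ^ 2) / √π) z := by
  simp only [integral_Wr]
  refine (((hasDerivAt_integral_fz_mul (integrable_fzDeriv w) z).const_mul 2).const_sub
    1).congr_deriv ?_
  rw [integral_fzDeriv_mul_fzDeriv]
  ring

end Wronskian

section Kernels

theorem cexp_neg_mul_sqrt_pi_mul_cexp_mul (z w c : ℂ) :
    Complex.exp (-z ^ 2 - w ^ 2) * (√π * Complex.exp (z ^ 2 + w ^ 2) * c) = √π * c := by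
  have cancel : Complex.exp (-z ^ 2 - w ^ 2) * Complex.exp (z ^ 2 + w ^ 2) = 1 := by
    rw [← Complex.exp_add]
    simp
  linear_combination √π * c * cancel

theorem cexp_mul_kbulk (z w : ℂ) :
    Complex.exp (-z ^ 2 - w ^ 2) * kbulk z w = √π * ∫ u, Wr w z u :=
  cexp_neg_mul_sqrt_pi_mul_cexp_mul z w _

theorem cexp_mul_kedge (z w : ℂ) :
    Complex.exp (-z ^ 2 - w ^ 2) * kedge z w = √π * ∫ u in Set.Iic (0 : ℝ), Wr w z u := by
  rw [kedge, cexp_neg_mul_sqrt_pi_mul_cexp_mul, integral_Iic_eq_integral_Iio]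

theorem hasDerivAt_cexp_mul_kbulk (w z : ℂ) :
    HasDerivAt (fun z ↦ Complex.exp (-z ^ 2 - w ^ 2) * kbulk z w) (Fsbulk z w) z := by
  simp only [cexp_mul_kbulk]
  refine ((hasDerivAt_integral_Wr w z).const_mul (√π : ℂ)).congr_deriv ?_
  rw [Fsbulk, mul_div_cancel₀ _ ofReal_sqrt_pi_ne_zero]

theorem hasDerivAt_cexp_mul_kedge (w z : ℂ) :
    HasDerivAt (fun z ↦ Complex.exp (-z ^ 2 - w ^ 2) * kedge z w) (Fsedge z w) z := by
  simp only [cexp_mul_kedge]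
  refine ((hasDerivAt_integral_Iic_Wr w z 0).const_mul (√π : ℂ)).congr_deriv ?_
  simp only [Fsedge, fz, fzDeriv, Complex.ofReal_zero, mul_zero, sub_zero]
  have inv_sqrt_two : (√2 : ℂ)⁻¹ = √2 / 2 := by
    exact_mod_cast (Real.sqrt_div_self (x := 2)).symm
  have := ofReal_sqrt_pi_ne_zero
  rw [one_div (√2 : ℂ), inv_sqrt_two]
  field

end Kernels

/-- Lemma 2.3(a): the bulk/edge limiting kernels solve the limiting
differential equations of the strong non-unitarity regime. -/
theorem limiting_ODE_strong (w : ℂ) :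
    (Complex.exp (-w^2-w^2) * kbulk w w = 0 ∧
      ∀ z : ℂ, HasDerivAt (fun z => Complex.exp (-z^2-w^2) * kbulk z w) (Fsbulk z w) z) ∧
    (Complex.exp (-w^2-w^2) * kedge w w = 0 ∧
      ∀ z : ℂ, HasDerivAt (fun z => Complex.exp (-z^2-w^2) * kedge z w) (Fsedge z w) z) := by
  refine ⟨⟨?_, hasDerivAt_cexp_mul_kbulk w⟩, ⟨?_, hasDerivAt_cexp_mul_kedge w⟩⟩
  · simp [cexp_mul_kbulk, Wr_self]
  · simp [cexp_mul_kedge, Wr_self]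
end SI
end
end
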